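/- Let n ≥ 1, let E := EuclideanSpace ℝ (Fin n), let A be a compact subset of the closed unit ball {x | ‖x‖ ≤ 1} of E, and let 0 < ε ≤ 1. Then volume (A^{−ε}) ≤ (1 − ε)^n * volume A, and consequently volume (A^{−ε}) ≤ Real.exp (−(n : ℝ) * ε) * volume A, where the ε-contraction is taken with respect to the Euclidean metric and 'volume' is the Lebesgue measure on E. -/

import Mathlib

open MeasureTheory

/-- The ε-contraction of a set in a metric space. -/
def contractSet {X : Type*} [MetricSpace X] (S : Set X) (ε : ℝ) : Set X :=
  {x | x ∈ S ∧ ∀ y, dist y x ≤ ε → y ∈ S}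

/-!
If `A` lies in the closed ball of radius `r` about `c`, then every point `x` of its `ε`-contraction
is within `r - ε` of `c`, since one can still move away from `c` by `ε` without leaving `A`.
For `ε < r`, dilating by `(1 - ε / r)⁻¹` about `c` therefore moves `x` by at most `ε`, so the image
of `x` is in `A`. Hence the contraction is contained in the homothetic copy of `A` with ratio
`1 - ε / r`; for `ε = r` both are contained in `{c}`.
-/

open AffineMap Metric Module

theorem one_sub_pow_le_exp_neg_mul {t : ℝ} (ht : t ≤ 1) (n : ℕ) :
    (1 - t) ^ n ≤ Real.exp (-(n : ℝ) * t) := calc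
  (1 - t) ^ n ≤ Real.exp (-t) ^ n :=
    pow_le_pow_left₀ (sub_nonneg.mpr ht) (Real.one_sub_le_exp_neg t) n
  _ = Real.exp (-(n : ℝ) * t) := by rw [← Real.exp_nat_mul, mul_neg, neg_mul]

section NormedSpace

variable {E : Type*} [NormedAddCommGroup E] [NormedSpace ℝ E] {A : Set E} {c : E} {r ε : ℝ}

theorem contractSet_subset_closedBall_sub (hA : A ⊆ closedBall c r) (hε : 0 ≤ ε) (hεr : ε ≤ r) :
    contractSet A ε ⊆ closedBall c (r - ε) := by
  rintro x ⟨-, hx⟩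
  rw [mem_closedBall']
  rcases eq_or_ne c x with rfl | hcx
  · simpa using hεr
  have hd : 0 < dist c x := dist_pos.mpr hcx
  let y := homothety c (1 + ε / dist c x) x
  have hyx : dist y x = ε := by
    rw [dist_homothety_self, sub_add_cancel_left, norm_neg, Real.norm_of_nonneg (by positivity),
      div_mul_cancel₀ _ hd.ne']
  have hyc : dist y c = dist c x + ε := by
    rw [dist_homothety_center, Real.norm_of_nonneg (by positivity), add_mul, one_mul,
      div_mul_cancel₀ _ hd.ne']
  have hyr : dist y c ≤ r := hA (hx y hyx.le)
  linarith

theorem contractSet_subset_image_homothety (hA : A ⊆ closedBall c r) (hr : 0 < r) (hε : 0 ≤ ε)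
    (hεr : ε ≤ r) : contractSet A ε ⊆ homothety c (1 - ε / r) '' A := by
  intro x hx
  have hxc : dist c x ≤ r - ε :=
    mem_closedBall'.mp (contractSet_subset_closedBall_sub hA hε hεr hx)
  rcases hεr.eq_or_lt with rfl | hlt
  · obtain rfl : c = x := dist_le_zero.mp (by simpa using hxc)
    exact ⟨c, hx.1, homothety_apply_same ..⟩
  have hsub : 0 < r - ε := sub_pos.mpr hlt
  have hratio : 1 - ε / r ≠ 0 := by
    rw [one_sub_div hr.ne']
    positivity
  let y := homothety c (1 - ε / r)⁻¹ x
  have hyx : dist y x ≤ ε := calc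
    dist y x = ‖1 - (1 - ε / r)⁻¹‖ * dist c x := dist_homothety_self ..
    _ = ε / (r - ε) * dist c x := by
      rw [one_sub_div hr.ne', inv_div, one_sub_div hsub.ne', sub_sub_cancel_left, neg_div, norm_neg,
        Real.norm_of_nonneg (by positivity)]
    _ ≤ ε / (r - ε) * (r - ε) := by gcongr
    _ = ε := div_mul_cancel₀ _ hsub.ne'
  refine ⟨y, hx.2 y hyx, ?_⟩
  rw [← homothety_mul_apply, mul_inv_cancel₀ hratio, homothety_one, id_apply]

variable [FiniteDimensional ℝ E] [MeasurableSpace E] [BorelSpace E] (μ : Measure E)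
  [μ.IsAddHaarMeasure]

theorem measure_contractSet_le_pow_mul (hA : A ⊆ closedBall c r) (hr : 0 < r) (hε : 0 ≤ ε)
    (hεr : ε ≤ r) :
    μ (contractSet A ε) ≤ ENNReal.ofReal ((1 - ε / r) ^ finrank ℝ E) * μ A := by
  have hratio : 0 ≤ 1 - ε / r := sub_nonneg.mpr (div_le_one_of_le₀ hεr hr.le)
  calc
    μ (contractSet A ε) ≤ μ (homothety c (1 - ε / r) '' A) :=
      measure_mono (contractSet_subset_image_homothety hA hr hε hεr)
    _ = ENNReal.ofReal ((1 - ε / r) ^ finrank ℝ E) * μ A := by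
      rw [Measure.addHaar_image_homothety, abs_of_nonneg (pow_nonneg hratio _)]

theorem volume_contract_le_general (hA : A ⊆ closedBall c r) (hr : 0 < r) (hε : 0 ≤ ε)
    (hεr : ε ≤ r) :
    μ (contractSet A ε) ≤ ENNReal.ofReal ((1 - ε / r) ^ finrank ℝ E) * μ A ∧
    μ (contractSet A ε) ≤ ENNReal.ofReal (Real.exp (-(finrank ℝ E : ℝ) * (ε / r))) * μ A := by
  have hpow := measure_contractSet_le_pow_mul μ hA hr hε hεr
  refine ⟨hpow, hpow.trans ?_⟩
  gcongr
  exact one_sub_pow_le_exp_neg_mul (div_le_one_of_le₀ hεr hr.le) _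

end NormedSpace

theorem volume_contract_le
    (n : ℕ) (hn : 1 ≤ n) (A : Set (EuclideanSpace ℝ (Fin n)))
    (hA : IsCompact A) (hAsub : A ⊆ {x | ‖x‖ ≤ 1})
    (ε : ℝ) (hε : 0 < ε) (hε1 : ε ≤ 1) :
    volume (contractSet A ε) ≤ ENNReal.ofReal ((1 - ε) ^ n) * volume A ∧
    volume (contractSet A ε) ≤ ENNReal.ofReal (Real.exp (-(n : ℝ) * ε)) * volume A := by
  have hball : A ⊆ closedBall 0 1 := fun x hx ↦ mem_closedBall_zero_iff.mpr (hAsub hx)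
  simpa using volume_contract_le_general volume hball one_pos hε.le hε1
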